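/- arXiv:1101.1800 — 2 statements merged into one kernel-verified Lean document; each statement's English description precedes it below -/
import Mathlib

section
/- If x, y ∈ 𝓡 satisfy x ⪯ y, x ≠ y and x ∼ y, then x ∈ 𝓡₉ and y ∈ ℚ_F. -/
/-- The ambient space `𝓡` of decimal representations: an integer part together
with a sequence of digits in `{0,…,9}`. -/
abbrev DecimalRep := ℤ × (ℕ → Fin 10)

namespace DecimalRep

open scoped Classical

/-- The truncation `[x]_k = x₀ + ∑_{i=1}^k x_i / 10^i` of `x` up to the `k`-th
digit, as a rational number. -/
def trunc (x : DecimalRep) (k : ℕ) : ℚ :=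
  (x.1 : ℚ) + ∑ i ∈ Finset.range k, ((x.2 i : ℕ) : ℚ) / 10 ^ (i + 1)

/-- The order `⪯` on `𝓡`: `x ⪯ y` iff every truncation of `x` is at most the
corresponding truncation of `y`. -/
def le (x y : DecimalRep) : Prop := ∀ k : ℕ, trunc x k ≤ trunc y k

/-- The strict order `≺` on `𝓡`. -/
def lt (x y : DecimalRep) : Prop := le x y ∧ x ≠ y

/-- Two decimal representations are equivalent ("have no gap") iff there is no
third element lying between them. -/
def equiv (x y : DecimalRep) : Prop :=
  ¬ ∃ z : DecimalRep, z ≠ x ∧ z ≠ y ∧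
      ((le x z ∧ le z y) ∨ (le y z ∧ le z x))

/-- `𝓡₉`: decimal representations ending in an infinite string of nines. -/
def allNines (x : DecimalRep) : Prop := ∃ N : ℕ, ∀ k ≥ N, x.2 k = 9

/-- `ℚ_F`: decimal representations ending in an infinite string of zeros. -/
def finiteDec (x : DecimalRep) : Prop := ∃ N : ℕ, ∀ k ≥ N, x.2 k = 0

/-- The decimal expansion map `ι : ℚ → 𝓡`, satisfying
`[ι(α)]_k = ⌊10^k·α⌋/10^k` for all `k`. -/
def iota (α : ℚ) : DecimalRep :=
  (⌊α⌋, fun k => ⟨(⌊α * 10 ^ (k + 1)⌋ % 10).toNat, by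
    have h1 : (0 : ℤ) ≤ ⌊α * 10 ^ (k + 1)⌋ % 10 := Int.emod_nonneg _ (by norm_num)
    have h2 : ⌊α * 10 ^ (k + 1)⌋ % 10 < 10 := Int.emod_lt_of_pos _ (by norm_num)
    omega⟩)

/-- `M` is a least upper bound of `W` in `(𝓡,⪯)`. -/
def IsLub (W : Set DecimalRep) (M : DecimalRep) : Prop :=
  (∀ w ∈ W, le w M) ∧ ∀ M' : DecimalRep, (∀ w ∈ W, le w M') → le M M'

/-- `M` is a greatest lower bound of `W` in `(𝓡,⪯)`. -/
def IsGlb (W : Set DecimalRep) (M : DecimalRep) : Prop :=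
  (∀ w ∈ W, le M w) ∧ ∀ M' : DecimalRep, (∀ w ∈ W, le M' w) → le M' M

/-- The least upper bound of a set in `(𝓡,⪯)` (junk value if none exists). -/
noncomputable def sup (W : Set DecimalRep) : DecimalRep :=
  if h : ∃ M, IsLub W M then h.choose else default

/-- The greatest lower bound of a set in `(𝓡,⪯)` (junk value if none exists). -/
noncomputable def inf (W : Set DecimalRep) : DecimalRep :=
  if h : ∃ M, IsGlb W M then h.choose else default

/-- Addition `x ⊕ y := sup {ι([x]_k + [y]_k) : k ∈ ℕ}` on `𝓡`. -/
noncomputable def add (x y : DecimalRep) : DecimalRep :=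
  sup { z | ∃ k : ℕ, z = iota (trunc x k + trunc y k) }

/-- The "additive inverse" map `Ψ(x₀.x₁x₂⋯) = (−1−x₀).(9−x₁)(9−x₂)⋯`. -/
def psi (x : DecimalRep) : DecimalRep :=
  (-1 - x.1, fun k => ⟨9 - (x.2 k).val, by have := (x.2 k).isLt; omega⟩)

/-- The signal map: `0` on the nonnegative part, `1` on the negative part. -/
noncomputable def sign (x : DecimalRep) : ℕ :=
  if le (iota 0) x then 0 else 1

/-- The absolute value `‖x‖ := max {x, Ψ(x)}` with respect to `⪯`. -/
noncomputable def norm (x : DecimalRep) : DecimalRep :=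
  if le x (psi x) then psi x else x

/-- Multiplication
`x ⊗ y := Ψ^(sign x + sign y) (sup {ι([‖x‖]_k · [‖y‖]_k) : k ∈ ℕ})` on `𝓡`. -/
noncomputable def mul (x y : DecimalRep) : DecimalRep :=
  psi^[sign x + sign y]
    (sup { z | ∃ k : ℕ, z = iota (trunc (norm x) k * trunc (norm y) k) })

/-- The multiplicative inverse
`x⁻¹ := Ψ^(sign x) (inf {ι(1/[‖x‖]_k) : k ∈ ℕ, [‖x‖]_k > 0})`. -/
noncomputable def inv (x : DecimalRep) : DecimalRep :=
  psi^[sign x]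
    (inf { z | ∃ k : ℕ, 0 < trunc (norm x) k ∧ z = iota (1 / trunc (norm x) k) })

/-- A sequence of rationals is Cauchy. -/
def IsCauchy (x : ℕ → ℚ) : Prop :=
  ∀ ε : ℚ, 0 < ε → ∃ N : ℕ, ∀ m n : ℕ, N ≤ m → N ≤ n → |x m - x n| < ε

/-- The upper limit `inf { sup {f k : k ≥ n} : n ∈ ℕ }` of a sequence in `𝓡`. -/
noncomputable def upperLimit (f : ℕ → DecimalRep) : DecimalRep :=
  inf { z | ∃ n : ℕ, z = sup { w | ∃ k : ℕ, n ≤ k ∧ w = f k } }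

/-- The lower limit `sup { inf {f k : k ≥ n} : n ∈ ℕ }` of a sequence in `𝓡`. -/
noncomputable def lowerLimit (f : ℕ → DecimalRep) : DecimalRep :=
  sup { z | ∃ n : ℕ, z = inf { w | ∃ k : ℕ, n ≤ k ∧ w = f k } }

end DecimalRep

/-!
If `x ≺ y`, some truncations satisfy `[x]_N < [y]_N`. Being integers over `10 ^ N`, they differ by
at least one unit in the `N`-th digit, so the strict inequality survives any change of the digits
after the `N`-th. Replacing those digits of `x` by nines, or those of `y` by zeros, therefore
produces an element between `x` and `y` that is distinct from `y`, respectively `x`. As there is no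
gap, it must be `x`, respectively `y`, itself.
-/

namespace DecimalRep

variable {x y z : DecimalRep} {k N : ℕ}

/-- The integer `10 ^ k * [x]_k`, written in decimal as `x₀x₁⋯x_k` when `x₀ ≥ 0`. It is defined by
recursion, so that comparisons of truncations become integer arithmetic. -/
def scaledTrunc (x : DecimalRep) : ℕ → ℤ
  | 0 => x.1
  | k + 1 => 10 * scaledTrunc x k + (x.2 k : ℕ)

theorem trunc_eq_scaledTrunc_div (x : DecimalRep) (k : ℕ) :
    trunc x k = scaledTrunc x k / 10 ^ k := by
  induction k with
  | zero => simp [trunc, scaledTrunc]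
  | succ k ih =>
    have trunc_succ : trunc x (k + 1) = trunc x k + ((x.2 k : ℕ) : ℚ) / 10 ^ (k + 1) := by
      simp only [trunc, Finset.sum_range_succ, add_assoc]
    rw [trunc_succ, ih, scaledTrunc]
    push_cast
    field_simp
    ring

theorem trunc_lt_trunc_iff : trunc x k < trunc y k ↔ scaledTrunc x k < scaledTrunc y k := by
  rw [trunc_eq_scaledTrunc_div, trunc_eq_scaledTrunc_div,
    div_lt_div_iff_of_pos_right (by positivity), Int.cast_lt]

theorem trunc_injective : Function.Injective trunc := by
  intro x y h
  have scaled_eq (k : ℕ) : scaledTrunc x k = scaledTrunc y k := by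
    have := congrFun h k
    rwa [trunc_eq_scaledTrunc_div, trunc_eq_scaledTrunc_div, div_left_inj' (by positivity),
      Int.cast_inj] at this
  refine Prod.ext (scaled_eq 0) (funext fun k => Fin.ext ?_)
  have := scaled_eq (k + 1)
  simp only [scaledTrunc, scaled_eq k] at this
  lia

theorem exists_trunc_lt_of_lt (h : lt x y) : ∃ N, trunc x N < trunc y N := by
  by_contra! hyx
  exact h.2 (trunc_injective (funext fun k => le_antisymm (h.1 k) (hyx k)))

theorem trunc_lt_trunc_of_le (hN : trunc x N < trunc y N) (hk : N ≤ k) :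
    trunc x k < trunc y k := by
  induction k, hk using Nat.le_induction with
  | base => exact hN
  | succ k _ ih =>
    rw [trunc_lt_trunc_iff] at ih ⊢
    calc scaledTrunc x (k + 1)
      _ < 10 * (scaledTrunc x k + 1) := by
        rw [scaledTrunc, mul_add, add_lt_add_iff_left]
        exact_mod_cast (x.2 k).isLt
      _ ≤ 10 * scaledTrunc y k := by lia
      _ ≤ scaledTrunc y (k + 1) := by
        rw [scaledTrunc]
        lia

theorem lt_of_trunc_lt (hle : ∀ k ≤ N, trunc x k ≤ trunc y k) (hN : trunc x N < trunc y N) :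
    lt x y := by
  refine ⟨fun k => ?_, fun hxy => hN.ne (congrArg (trunc · N) hxy)⟩
  obtain hk | hk := le_total k N
  · exact hle k hk
  · exact (trunc_lt_trunc_of_le hN hk).le

theorem le_of_digits_le (hint : x.1 ≤ y.1) (hdigits : ∀ i, x.2 i ≤ y.2 i) : le x y := by
  intro k
  unfold trunc
  gcongr with i
  exact hdigits i

/-- The representation with the integer part and the first `N` decimal digits of `x`, followed by
the digit `d` repeated forever. As the digit `x_{i+1}` is stored as `x.2 i`, these first digits are
the ones with index `i < N`. -/
def fillTail (x : DecimalRep) (N : ℕ) (d : Fin 10) : DecimalRep :=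
  (x.1, fun i => if i < N then x.2 i else d)

theorem trunc_fillTail_of_le (x : DecimalRep) (d : Fin 10) (hk : k ≤ N) :
    trunc (fillTail x N d) k = trunc x k := by
  simp only [trunc, fillTail]
  congr 1
  refine Finset.sum_congr rfl fun i hi => ?_
  rw [if_pos ((Finset.mem_range.1 hi).trans_le hk)]

theorem allNines_fillTail (x : DecimalRep) (N : ℕ) : allNines (fillTail x N 9) :=
  ⟨N, fun _ hk => if_neg hk.not_gt⟩

theorem finiteDec_fillTail (x : DecimalRep) (N : ℕ) : finiteDec (fillTail x N 0) :=
  ⟨N, fun _ hk => if_neg hk.not_gt⟩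

theorem le_fillTail_nine (x : DecimalRep) (N : ℕ) : le x (fillTail x N 9) := by
  refine le_of_digits_le le_rfl fun i => ?_
  simp only [fillTail]
  split_ifs
  · exact le_rfl
  · exact Fin.le_last _

theorem fillTail_zero_le (x : DecimalRep) (N : ℕ) : le (fillTail x N 0) x := by
  refine le_of_digits_le le_rfl fun i => ?_
  simp only [fillTail]
  split_ifs
  · exact le_rfl
  · exact Fin.zero_le _

theorem fillTail_lt (d : Fin 10) (hle : le x y) (hN : trunc x N < trunc y N) :
    lt (fillTail x N d) y :=
  lt_of_trunc_lt (fun k hk => (trunc_fillTail_of_le x d hk).trans_le (hle k))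
    ((trunc_fillTail_of_le x d le_rfl).trans_lt hN)

theorem lt_fillTail (d : Fin 10) (hle : le x y) (hN : trunc x N < trunc y N) :
    lt x (fillTail y N d) :=
  lt_of_trunc_lt (fun k hk => (hle k).trans_eq (trunc_fillTail_of_le y d hk).symm)
    (hN.trans_eq (trunc_fillTail_of_le y d le_rfl).symm)

theorem equiv.eq_left_of_le_of_lt (h : equiv x y) (hxz : le x z) (hzy : lt z y) : z = x := by
  by_contra hzx
  exact h ⟨z, hzx, hzy.2, Or.inl ⟨hxz, hzy.1⟩⟩

theorem equiv.eq_right_of_lt_of_le (h : equiv x y) (hxz : lt x z) (hzy : le z y) : z = y := by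
  by_contra hzy_ne
  exact h ⟨z, hxz.2.symm, hzy_ne, Or.inl ⟨hxz.1, hzy⟩⟩

end DecimalRep

open DecimalRep in
/-- If `x ⪯ y`, `x ≠ y` and `x ∼ y`, then `x ∈ 𝓡₉` and `y ∈ ℚ_F`. -/
theorem allNines_and_finiteDec_of_equiv (x y : DecimalRep)
    (hle : le x y) (hne : x ≠ y) (heq : equiv x y) :
    allNines x ∧ finiteDec y := by
  obtain ⟨N, hN⟩ := exists_trunc_lt_of_lt ⟨hle, hne⟩
  have hx : fillTail x N 9 = x :=
    heq.eq_left_of_le_of_lt (le_fillTail_nine x N) (fillTail_lt 9 hle hN)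
  have hy : fillTail y N 0 = y :=
    heq.eq_right_of_lt_of_le (lt_fillTail 0 hle hN) (fillTail_zero_le y N)
  exact ⟨hx ▸ allNines_fillTail x N, hy ▸ finiteDec_fillTail y N⟩
end

section
/- For all x, y ∈ 𝓡, Ψ(x ⊗ y) = Ψ(x) ⊗ y = x ⊗ Ψ(y) (equalities in 𝓡). -/
/-!
The sign of `x` is that of its integer part `x₀`, because all truncations of `x` lie in
`[x₀, x₀ + 1)`. Since `Ψ` sends `x₀` to `-1 - x₀`, it always flips the sign, and being an
involution it leaves `‖x‖ = max {x, Ψ(x)}` unchanged. Replacing `x` by `Ψ(x)` in `x ⊗ y` therefore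
keeps the supremum and changes the number of applications of `Ψ` by one.
-/

namespace DecimalRep

theorem psi_involutive : Function.Involutive psi := by
  intro x
  ext k
  · simp [psi]
  · have : (x.2 k : ℕ) < 10 := (x.2 k).isLt
    simp only [psi]
    omega

theorem fst_psi (x : DecimalRep) : (psi x).1 = -1 - x.1 := rfl

theorem trunc_zero (x : DecimalRep) : trunc x 0 = x.1 := by
  simp [trunc]

theorem trunc_succ (x : DecimalRep) (k : ℕ) :
    trunc x (k + 1) = trunc x k + ((x.2 k : ℕ) : ℚ) / 10 ^ (k + 1) := by
  simp only [trunc, Finset.sum_range_succ, add_assoc]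

theorem fst_le_trunc (x : DecimalRep) (k : ℕ) : (x.1 : ℚ) ≤ trunc x k :=
  le_add_of_nonneg_right (Finset.sum_nonneg fun _ _ => by positivity)

theorem trunc_add_trunc_psi (x : DecimalRep) (k : ℕ) :
    trunc x k + trunc (psi x) k = -1 / 10 ^ k := by
  induction k with
  | zero => simp [trunc_zero, fst_psi]
  | succ k ih =>
    have digit_add : ((x.2 k : ℕ) : ℚ) + (((psi x).2 k : ℕ) : ℚ) = 9 := by
      have : (x.2 k : ℕ) < 10 := (x.2 k).isLt
      simp only [psi]
      norm_cast
      omega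
    calc trunc x (k + 1) + trunc (psi x) (k + 1)
        = (trunc x k + trunc (psi x) k)
            + (((x.2 k : ℕ) : ℚ) + (((psi x).2 k : ℕ) : ℚ)) / 10 ^ (k + 1) := by
          rw [trunc_succ, trunc_succ]; ring
      _ = -1 / 10 ^ k + 9 / 10 ^ (k + 1) := by rw [ih, digit_add]
      _ = -1 / 10 ^ (k + 1) := by rw [pow_succ]; field_simp; norm_num

theorem trunc_lt_fst_add_one (x : DecimalRep) (k : ℕ) : trunc x k < x.1 + 1 := by
  have lower : (-1 - x.1 : ℚ) ≤ trunc (psi x) k := by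
    simpa [fst_psi] using fst_le_trunc (psi x) k
  have neg : (-1 : ℚ) / 10 ^ k < 0 := div_neg_of_neg_of_pos (by norm_num) (by positivity)
  linarith [trunc_add_trunc_psi x k]

theorem fst_le_of_le {x y : DecimalRep} (h : le x y) : x.1 ≤ y.1 := by
  simpa [trunc_zero] using h 0

theorem le_of_fst_lt {x y : DecimalRep} (h : x.1 < y.1) : le x y := fun k =>
  calc trunc x k ≤ x.1 + 1 := (trunc_lt_fst_add_one x k).le
    _ ≤ y.1 := by exact_mod_cast h
    _ ≤ trunc y k := fst_le_trunc y k

theorem le_psi_iff (x : DecimalRep) : le x (psi x) ↔ x.1 < 0 := by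
  constructor
  · intro h
    have : x.1 ≤ -1 - x.1 := fst_le_of_le h
    omega
  · intro h
    exact le_of_fst_lt (by rw [fst_psi]; omega)

theorem psi_le_iff (x : DecimalRep) : le (psi x) x ↔ 0 ≤ x.1 := by
  have h := le_psi_iff (psi x)
  rw [psi_involutive x, fst_psi] at h
  exact h.trans (by omega)

theorem trunc_iota_zero (k : ℕ) : trunc (iota 0) k = 0 := by
  simp [trunc, iota]

theorem iota_zero_le_iff (x : DecimalRep) : le (iota 0) x ↔ 0 ≤ x.1 := by
  constructor
  · intro h
    simpa [iota] using fst_le_of_le h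
  · intro h k
    calc trunc (iota 0) k = 0 := trunc_iota_zero k
      _ ≤ x.1 := by exact_mod_cast h
      _ ≤ trunc x k := fst_le_trunc x k

theorem norm_psi (x : DecimalRep) : norm (psi x) = norm x := by
  simp only [norm, psi_involutive x, le_psi_iff, psi_le_iff]
  split_ifs <;> first | rfl | omega

theorem sign_psi (x : DecimalRep) : sign (psi x) = 1 - sign x := by
  simp only [sign, iota_zero_le_iff, fst_psi]
  split_ifs <;> omega

theorem iterate_psi_sign_psi (x z : DecimalRep) :
    psi^[sign (psi x)] z = psi (psi^[sign x] z) := by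
  have sign_eq : sign x = 0 ∨ sign x = 1 := by
    unfold sign
    split_ifs <;> simp
  rcases sign_eq with h | h
  · simp [sign_psi, h]
  · simp [sign_psi, h, psi_involutive z]

protected theorem mul_comm (x y : DecimalRep) : mul x y = mul y x := by
  simp only [mul, add_comm (sign x), mul_comm (trunc (norm x) _)]

theorem mul_psi_left (x y : DecimalRep) : mul (psi x) y = psi (mul x y) := by
  simp only [mul, norm_psi, Function.iterate_add_apply, iterate_psi_sign_psi]

theorem mul_psi_right (x y : DecimalRep) : mul x (psi y) = psi (mul x y) := by
  rw [DecimalRep.mul_comm, mul_psi_left, DecimalRep.mul_comm]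

end DecimalRep

open DecimalRep in
/-- `Ψ(x ⊗ y) = Ψ(x) ⊗ y = x ⊗ Ψ(y)` as equalities in `𝓡`. -/
theorem psi_mul (x y : DecimalRep) :
    psi (mul x y) = mul (psi x) y ∧ mul (psi x) y = mul x (psi y) := by
  rw [mul_psi_left, mul_psi_right]
  exact ⟨rfl, rfl⟩
end
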